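/- For every B > 0 there exists a constant c = c(B) > 0 such that for every n ≥ 2, every rate R with R − c√((log n)/n) > 0, and every positive semidefinite matrix Σ ∈ ℝ^{n×n}, Σ ≠ 0, with eigenvalues λ, there exist functions f : ℝⁿ → {1,…,⌊2^{nR}⌋} and g : {1,…,⌊2^{nR}⌋} → ℝⁿ such that for W ~ N(0, Iₙ): E[d_Σ(W, g(f(W)))] ≤ n · D_wf(λ, t′) + c n^{−B} · tr(Σ), where t′ > 0 is the water level satisfying R_wf(λ, t′) = R − c√((log n)/n). -/

import Mathlib

open MeasureTheory Matrix Real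

/-- Standard Gaussian measure `N(0, I_n)` on `ℝⁿ`. -/
noncomputable def stdGaussian (n : ℕ) : Measure (Fin n → ℝ) :=
  Measure.pi fun _ => ProbabilityTheory.gaussianReal 0 1

/-- Distortion `d_Σ(w, v) = (w - v)ᵀ Σ (w - v)`. -/
noncomputable def dSig {n : ℕ} (Sig : Matrix (Fin n) (Fin n) ℝ) (w v : Fin n → ℝ) : ℝ :=
  (w - v) ⬝ᵥ Sig.mulVec (w - v)

/-- Waterfilling distortion `D_wf(λ, t) = (1/n) Σᵢ min{λᵢ, t}`. -/
noncomputable def Dwf {n : ℕ} (lam : Fin n → ℝ) (t : ℝ) : ℝ :=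
  (1 / (n : ℝ)) * ∑ i, min (lam i) t

/-- Waterfilling rate `R_wf(λ, t) = (1/(2n)) Σᵢ max{0, log₂(λᵢ/t)}`. -/
noncomputable def Rwf {n : ℕ} (lam : Fin n → ℝ) (t : ℝ) : ℝ :=
  (1 / (2 * (n : ℝ))) * ∑ i, max 0 (Real.logb 2 (lam i / t))

/-!
By rotation invariance of the Gaussian law, `Σ` may be taken diagonal, with variances `λᵢ`.
Coordinates with `λᵢ ≤ t` are reproduced by `0`. For the others, draw the codewords independently
from the law of `√(1 - ρᵢ) zᵢ` with `z` standard Gaussian and `ρᵢ = s / λᵢ`, `s` slightly below `t`.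
The probability that such a codeword lies within the target distortion of a word `w` is bounded
below by changing measure to the test channel, the law of `z` given `w` when the pairs `(wᵢ, zᵢ)`
have correlation `√(1 - ρᵢ)`: under it Chebyshev's inequality applies, and for typical `w` the
likelihood ratio is at most `exp (n R_wf log 2 + O(u))`. With `2^(nR)` codewords all typical words
but a fraction `n^(-B)`, as weighted by their distortion, are then covered as soon as
`R - R_wf` exceeds a multiple of `u / n`. Atypical words have probability `O(n^(-2B))` by a
Chernoff bound for weighted `χ²` sums when `u` is a large multiple of `√(n log n)`, and the
Cauchy–Schwarz inequality bounds their contribution by `O(n^(-B)) tr Σ`.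
-/

section RandomCoding

variable {X X' Y Y' : Type*} [MeasurableSpace X] [MeasurableSpace X']

/-- The source law `μ` can be quantized to `M` points with expected distortion at most `D`.
The encoder is measurable and the distortion integrable, so that the Bochner integral is a genuine
expectation. -/
def IsAchievable (μ : Measure X) (d : X → Y → ℝ) (M : ℕ) (D : ℝ) : Prop :=
  ∃ (f : X → Fin M) (g : Fin M → Y), Measurable f ∧
    Integrable (fun x ↦ d x (g (f x))) μ ∧ ∫ x, d x (g (f x)) ∂μ ≤ D

theorem IsAchievable.mono {μ : Measure X} {d : X → Y → ℝ} {M : ℕ} {D D' : ℝ}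
    (h : IsAchievable μ d M D) (hD : D ≤ D') : IsAchievable μ d M D' :=
  let ⟨f, g, hf, hint, hle⟩ := h
  ⟨f, g, hf, hint, hle.trans hD⟩

theorem IsAchievable.comp_measurePreserving {μ : Measure X} {μ' : Measure X'} {d : X → Y → ℝ}
    {d' : X' → Y' → ℝ} {M : ℕ} {D : ℝ} (h : IsAchievable μ d M D) {φ : X' → X}
    (hφ : MeasurePreserving φ μ' μ) (ψ : Y → Y') {r : X' → ℝ} (hr : Integrable r μ')
    (hd : ∀ x y, d' x (ψ y) = d (φ x) y + r x) :
    IsAchievable μ' d' M (D + ∫ x, r x ∂μ') := by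
  obtain ⟨f, g, hf, hint, hle⟩ := h
  have hint' : Integrable (fun x ↦ d (φ x) (g (f (φ x)))) μ' :=
    hφ.integrable_comp_of_integrable hint
  refine ⟨f ∘ φ, ψ ∘ g, hf.comp hφ.measurable, ?_, ?_⟩ <;> simp only [Function.comp_apply, hd]
  · exact hint'.add hr
  · rw [integral_add hint' hr]
    gcongr
    rw [← hφ.map_eq] at hint hle
    rwa [integral_map hφ.aemeasurable hint.aestronglyMeasurable] at hle

theorem exists_measurable_forall_mem {ι : Type*} [Countable ι] [Nonempty ι] [MeasurableSpace ι]
    {C : ι → Set X} (hC : ∀ i, MeasurableSet (C i)) (hcover : ∀ x, ∃ i, x ∈ C i) :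
    ∃ f : X → ι, Measurable f ∧ ∀ x, x ∈ C (f x) := by
  classical
  obtain ⟨e, he⟩ := exists_surjective_nat ι
  have hcover' : ∀ x, ∃ k, x ∈ C (e k) := fun x ↦ (he.exists (p := fun i ↦ x ∈ C i)).1 (hcover x)
  exact ⟨fun x ↦ e (Nat.find (hcover' x)),
    measurable_from_nat.comp (measurable_find hcover' fun k ↦ hC (e k)),
    fun x ↦ Nat.find_spec (hcover' x)⟩

theorem exists_measurable_argmin {ι : Type*} [Finite ι] [Nonempty ι] [MeasurableSpace ι]
    {d : ι → X → ℝ} (hd : ∀ i, Measurable (d i)) :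
    ∃ f : X → ι, Measurable f ∧ ∀ x i, d (f x) x ≤ d i x := by
  refine exists_measurable_forall_mem (C := fun j ↦ {x | ∀ i, d j x ≤ d i x}) (fun j ↦ ?_)
    fun x ↦ Finite.exists_min (d · x)
  simp only [Set.ofPred_forall]
  exact .iInter fun i ↦ measurableSet_le (hd j) (hd i)

variable [MeasurableSpace Y]

theorem exists_codebook_measure_uncovered_le (ν : Measure X) [SFinite ν] (μ : Measure Y)
    [IsProbabilityMeasure μ] {K : Set (X × Y)} (hK : MeasurableSet K) {G : Set X}
    (hG : MeasurableSet G) {p : ℝ} (hp : ∀ x ∈ G, p ≤ μ.real {y | (x, y) ∈ K}) (m : ℕ) :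
    ∃ y : Fin m → Y, ν (G ∩ {x | ∀ j, (x, y j) ∉ K}) ≤ ENNReal.ofReal (exp (-(p * m))) * ν G := by
  set uncovered : Set (X × (Fin m → Y)) := {q | q.1 ∈ G ∧ ∀ j, (q.1, q.2 j) ∉ K}
  have huncovered : MeasurableSet uncovered := by
    simp only [uncovered, Set.ofPred_and, Set.ofPred_forall]
    exact (measurable_fst hG).inter <| .iInter fun j ↦
      (by fun_prop : Measurable fun q : X × (Fin m → Y) ↦ (q.1, q.2 j)) hK.compl
  have hslice : ∀ x, Measure.pi (fun _ : Fin m ↦ μ) (Prod.mk x ⁻¹' uncovered) ≤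
      G.indicator (fun _ ↦ ENNReal.ofReal (exp (-(p * m)))) x := by
    intro x
    by_cases hx : x ∈ G
    · have hmiss : μ {y | (x, y) ∈ K}ᶜ ≤ ENNReal.ofReal (exp (-p)) := by
        have hKx : MeasurableSet {y | (x, y) ∈ K} := measurable_prodMk_left hK
        rw [← ofReal_measureReal, probReal_compl_eq_one_sub hKx]
        exact ENNReal.ofReal_le_ofReal (by linarith [hp x hx, add_one_le_exp (-p)])
      have hpi : Prod.mk x ⁻¹' uncovered = Set.univ.pi fun _ ↦ {y | (x, y) ∈ K}ᶜ := by
        ext y; simp [uncovered, hx]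
      rw [hpi, Measure.pi_pi, Finset.prod_const, Finset.card_univ, Fintype.card_fin,
        Set.indicator_of_mem hx, ← neg_mul, mul_comm, exp_nat_mul,
        ENNReal.ofReal_pow (exp_nonneg _)]
      gcongr
    · simp [uncovered, hx]
  obtain ⟨y, hy⟩ := exists_le_lintegral (μ := Measure.pi fun _ : Fin m ↦ μ)
    (measurable_measure_prodMk_right (μ := ν) huncovered).aemeasurable
  refine ⟨y, hy.trans ?_⟩
  calc ∫⁻ y, ν ((fun x ↦ (x, y)) ⁻¹' uncovered) ∂Measure.pi (fun _ : Fin m ↦ μ)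
      = ∫⁻ x, Measure.pi (fun _ : Fin m ↦ μ) (Prod.mk x ⁻¹' uncovered) ∂ν := by
        rw [← Measure.prod_apply_symm huncovered, Measure.prod_apply huncovered]
    _ ≤ ∫⁻ x, G.indicator (fun _ ↦ ENNReal.ofReal (exp (-(p * m)))) x ∂ν := lintegral_mono hslice
    _ = ENNReal.ofReal (exp (-(p * m))) * ν G := lintegral_indicator_const hG _

theorem exists_codebook_setIntegral_uncovered_le (γ : Measure X) [SFinite γ] (μ : Measure Y)
    [IsProbabilityMeasure μ] {K : Set (X × Y)} (hK : MeasurableSet K) {G : Set X}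
    (hG : MeasurableSet G) {p : ℝ} (hp : ∀ x ∈ G, p ≤ μ.real {y | (x, y) ∈ K}) {h : X → ℝ}
    (hh : Integrable h γ) (hh0 : 0 ≤ h) (m : ℕ) :
    ∃ y : Fin m → Y, ∫ x in G ∩ {x | ∀ j, (x, y j) ∉ K}, h x ∂γ ≤
      exp (-(p * m)) * ∫ x, h x ∂γ := by
  obtain ⟨y, hy⟩ := exists_codebook_measure_uncovered_le
    (γ.withDensity fun x ↦ ENNReal.ofReal (h x)) μ hK hG hp m
  refine ⟨y, (ENNReal.ofReal_le_ofReal_iff ?_).1 ?_⟩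
  · exact mul_nonneg (exp_nonneg _) (integral_nonneg hh0)
  · rw [ENNReal.ofReal_mul (exp_nonneg _), ofReal_integral_eq_lintegral_ofReal hh (.of_forall hh0),
      ofReal_integral_eq_lintegral_ofReal hh.integrableOn (.of_forall hh0),
      ← withDensity_apply' _ (G ∩ _)]
    refine hy.trans ?_
    gcongr
    rw [withDensity_apply _ hG]
    exact setLIntegral_le_lintegral _ _

theorem isAchievable_of_forall_exists_le {γ : Measure X} {d : X → Y → ℝ}
    (hd : Measurable (Function.uncurry d)) (hd0 : ∀ x y, 0 ≤ d x y) {M : ℕ} [NeZero M]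
    (g : Fin M → Y) {h : X → ℝ} (hh : Integrable h γ) (hle : ∀ x, ∃ j, d x (g j) ≤ h x) :
    IsAchievable γ d M (∫ x, h x ∂γ) := by
  obtain ⟨f, hf, hmin⟩ := exists_measurable_argmin fun j ↦
    (hd.comp measurable_prodMk_right : Measurable (d · (g j)))
  have hdf : Measurable fun x ↦ d x (g (f x)) :=
    hd.comp (measurable_id.prodMk ((measurable_of_countable g).comp hf))
  have hdf_le : ∀ x, d x (g (f x)) ≤ h x := fun x ↦
    let ⟨j, hj⟩ := hle x
    (hmin x j).trans hj
  have hdf_int : Integrable (fun x ↦ d x (g (f x))) γ :=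
    hh.mono' hdf.aestronglyMeasurable <| .of_forall fun x ↦ by
      rw [norm_of_nonneg (hd0 _ _)]; exact hdf_le x
  exact ⟨f, g, hf, hdf_int, integral_mono hdf_int hh hdf_le⟩

theorem isAchievable_of_forall_le_measureReal {γ : Measure X} [IsProbabilityMeasure γ]
    (μ : Measure Y) [IsProbabilityMeasure μ] {d : X → Y → ℝ} (hd : Measurable (Function.uncurry d))
    (hd0 : ∀ x y, 0 ≤ d x y) {y₀ : Y} (hint : Integrable (d · y₀) γ) {G : Set X}
    (hG : MeasurableSet G) {D : ℝ} (hD : 0 ≤ D) {p : ℝ}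
    (hp : ∀ x ∈ G, p ≤ μ.real {y | d x y ≤ D}) (m : ℕ) :
    IsAchievable γ d (m + 1)
      (D + exp (-(p * m)) * ∫ x, d x y₀ ∂γ + ∫ x in Gᶜ, d x y₀ ∂γ) := by
  have hK : MeasurableSet {q : X × Y | d q.1 q.2 ≤ D} := measurableSet_le hd measurable_const
  obtain ⟨y, hy⟩ := exists_codebook_setIntegral_uncovered_le γ μ hK hG hp hint (hd0 · y₀) m
  set N : Set X := G ∩ {x | ∀ j, (x, y j) ∉ {q : X × Y | d q.1 q.2 ≤ D}}
  have hN : MeasurableSet N := by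
    simp only [N, Set.ofPred_forall]
    exact hG.inter (.iInter fun j ↦ (measurable_prodMk_right hK).compl)
  have hcovered : ∀ x, ∃ j, d x ((Fin.cons y₀ y : Fin (m + 1) → Y) j) ≤
      D + N.indicator (d · y₀) x + Gᶜ.indicator (d · y₀) x := by
    intro x
    have hN0 : 0 ≤ N.indicator (d · y₀) x := Set.indicator_nonneg (fun x _ ↦ hd0 x y₀) x
    have hG0 : 0 ≤ Gᶜ.indicator (d · y₀) x := Set.indicator_nonneg (fun x _ ↦ hd0 x y₀) x
    by_cases hxG : x ∈ Gᶜ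
    · refine ⟨0, ?_⟩
      rw [Set.indicator_of_mem hxG, Fin.cons_zero]
      linarith
    by_cases hxN : x ∈ N
    · refine ⟨0, ?_⟩
      rw [Set.indicator_of_mem hxN, Fin.cons_zero]
      linarith
    · obtain ⟨j, hj⟩ : ∃ j, d x (y j) ≤ D := by
        by_contra! hfar
        exact hxN ⟨not_not.1 hxG, fun j ↦ (hfar j).not_ge⟩
      refine ⟨j.succ, ?_⟩
      rw [Fin.cons_succ]
      linarith
  have hsum : Integrable (fun x ↦ D + N.indicator (d · y₀) x) γ :=
    (integrable_const D).add (hint.indicator hN)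
  refine (isAchievable_of_forall_exists_le hd hd0 _ (hsum.add (hint.indicator hG.compl))
    hcovered).mono ?_
  simp only [Pi.add_apply]
  rw [integral_add hsum (hint.indicator hG.compl),
    integral_add (integrable_const D) (hint.indicator hN), integral_indicator hN,
    integral_indicator hG.compl, integral_const, probReal_univ, one_smul]
  gcongr

end RandomCoding

local notation "γ[" ι "]" => Measure.pi fun _ : ι ↦ ProbabilityTheory.gaussianReal 0 1

section GaussianMoments
open ProbabilityTheory
open scoped Nat

theorem integrable_pow_gaussianReal (m : ℝ) (v : NNReal) (k : ℕ) :
    Integrable (fun x ↦ x ^ k) (gaussianReal m v) :=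
  ((memLp_id_gaussianReal (k : NNReal)).integrable_norm_pow' (p := k)).mono (by fun_prop) (by simp)

theorem integral_pow_of_odd_gaussianReal {k : ℕ} (hk : Odd k) (v : NNReal) :
    ∫ x, x ^ k ∂gaussianReal 0 v = 0 := by
  have hneg : ∫ x, x ^ k ∂gaussianReal 0 v = -∫ x, x ^ k ∂gaussianReal 0 v := by
    conv_lhs => rw [← neg_zero (G := ℝ), ← gaussianReal_map_neg,
      integral_map (by fun_prop) (by fun_prop)]
    simp only [hk.neg_pow, integral_neg]
  linarith

theorem integral_pow_two_mul_gaussianReal (k : ℕ) :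
    ∫ x, x ^ (2 * k) ∂gaussianReal 0 1 = ((2 * k - 1 : ℕ)‼ : ℝ) := by
  have hexp : (2 * k + 1 : ℝ) / 2 = k + 1 / 2 := by ring
  have hhalf : ∫ x in Set.Ioi (0 : ℝ), x ^ (2 * k) * exp (-(1 / 2) * x ^ 2) =
      2 ^ (k : ℝ) * √2 * (1 / 2) * (((2 * k - 1 : ℕ)‼ : ℝ) * √π / 2 ^ k) := by
    have h := integral_rpow_mul_exp_neg_mul_rpow (p := 2) (q := (2 * k : ℕ)) (b := 1 / 2)
      two_pos (by linarith [(Nat.cast_nonneg (2 * k) : (0 : ℝ) ≤ _)]) (by norm_num)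
    simp only [rpow_natCast, rpow_two] at h
    rw [h, Nat.cast_mul, Nat.cast_two, neg_div, hexp, Real.Gamma_nat_add_half,
      one_div (2 : ℝ), inv_rpow two_pos.le, rpow_neg two_pos.le, inv_inv, rpow_add two_pos,
      sqrt_eq_rpow 2]
    norm_num
  have heven := integral_comp_abs (f := fun x ↦ x ^ (2 * k) * exp (-(1 / 2) * x ^ 2))
  simp only [sq_abs, (even_two_mul k).pow_abs] at heven
  simp only [integral_gaussianReal_eq_integral_smul one_ne_zero, gaussianPDFReal, smul_eq_mul,
    sub_zero, NNReal.coe_one, mul_one, mul_assoc, integral_const_mul]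
  simp only [← neg_div, neg_mul, one_div, inv_mul_eq_div, mul_comm (exp _)] at *
  rw [heven, hhalf, sqrt_mul two_pos.le]
  have := (sqrt_pos.2 pi_pos).ne'
  rw [rpow_natCast]
  field_simp

end GaussianMoments

section Concentration
open ProbabilityTheory

theorem one_sub_sum_variance_div_sq_le_measureReal_pi {ι : Type*} [Fintype ι] {Ω : ι → Type*}
    {mΩ : ∀ i, MeasurableSpace (Ω i)} {μ : ∀ i, Measure (Ω i)} [∀ i, IsProbabilityMeasure (μ i)]
    {X : ∀ i, Ω i → ℝ} (hX : ∀ i, MemLp (X i) 2 (μ i)) {v : ℝ} (hv : 0 < v) :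
    1 - (∑ i, Var[X i; μ i]) / v ^ 2 ≤
      (Measure.pi μ).real {ω | |∑ i, X i (ω i) - ∑ i, ∫ x, X i x ∂μ i| < v} := by
  have hX' : ∀ i, MemLp (fun ω : ∀ i, Ω i ↦ X i (ω i)) 2 (Measure.pi μ) := fun i ↦
    (hX i).comp_measurePreserving (measurePreserving_eval μ i)
  have hS : MemLp (∑ i, fun ω : ∀ i, Ω i ↦ X i (ω i)) 2 (Measure.pi μ) :=
    memLp_finsetSum' _ fun i _ ↦ hX' i
  have hmean : (Measure.pi μ)[∑ i, fun ω : ∀ i, Ω i ↦ X i (ω i)] = ∑ i, ∫ x, X i x ∂μ i := by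
    simp only [Finset.sum_apply]
    rw [integral_finsetSum _ fun i _ ↦ (hX' i).integrable one_le_two]
    exact Finset.sum_congr rfl fun i _ ↦ integral_comp_eval (hX i).1
  have hcheb := meas_ge_le_variance_div_sq hS hv
  rw [hmean, variance_sum_pi hX] at hcheb
  have hfar := ENNReal.toReal_le_of_le_ofReal
    (div_nonneg (Finset.sum_nonneg fun i _ ↦ variance_nonneg (X i) (μ i)) (sq_nonneg v)) hcheb
  have hunion : 1 ≤ (Measure.pi μ).real {ω | v ≤ |∑ i, X i (ω i) - ∑ i, ∫ x, X i x ∂μ i|} +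
      (Measure.pi μ).real {ω | |∑ i, X i (ω i) - ∑ i, ∫ x, X i x ∂μ i| < v} := by
    refine le_trans (le_of_eq ?_) (measureReal_union_le _ _)
    rw [← probReal_univ (μ := Measure.pi μ)]
    congr 1
    ext ω
    simpa using le_or_gt _ _
  simp only [Finset.sum_apply] at hfar
  rw [Measure.real] at hunion
  linarith

theorem integrable_quartic_gaussianReal (a b c d e : ℝ) :
    Integrable (fun x ↦ a + b * x + c * x ^ 2 + d * x ^ 3 + e * x ^ 4) (gaussianReal 0 1) := by
  have hint (r : ℝ) (k : ℕ) : Integrable (fun x ↦ r * x ^ k) (gaussianReal 0 1) :=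
    (integrable_pow_gaussianReal 0 1 k).const_mul r
  have hid : Integrable (fun x ↦ b * x) (gaussianReal 0 1) := by simpa using hint b 1
  exact ((((integrable_const a).add hid).add (hint c 2)).add (hint d 3)).add (hint e 4)

theorem integral_quartic_gaussianReal (a b c d e : ℝ) :
    ∫ x, (a + b * x + c * x ^ 2 + d * x ^ 3 + e * x ^ 4) ∂gaussianReal 0 1 = a + c + 3 * e := by
  have hodd (k : ℕ) (hk : Odd k) : ∫ x, x ^ k ∂gaussianReal 0 1 = 0 :=
    integral_pow_of_odd_gaussianReal hk 1
  have h2 : ∫ x, x ^ 2 ∂gaussianReal 0 1 = 1 := by simpa using integral_pow_two_mul_gaussianReal 1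
  have h4 : ∫ x, x ^ 4 ∂gaussianReal 0 1 = 3 := by
    simpa [Nat.doubleFactorial] using integral_pow_two_mul_gaussianReal 2
  have hint (r : ℝ) (k : ℕ) : Integrable (fun x ↦ r * x ^ k) (gaussianReal 0 1) :=
    (integrable_pow_gaussianReal 0 1 k).const_mul r
  have hint3 : Integrable (fun x ↦ a + b * x + c * x ^ 2 + d * x ^ 3) (gaussianReal 0 1) := by
    simpa using integrable_quartic_gaussianReal a b c d 0
  have hint2 : Integrable (fun x ↦ a + b * x + c * x ^ 2) (gaussianReal 0 1) := by
    simpa using integrable_quartic_gaussianReal a b c 0 0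
  have hint1 : Integrable (fun x ↦ a + b * x) (gaussianReal 0 1) := by
    simpa using integrable_quartic_gaussianReal a b 0 0 0
  have hid : Integrable (fun x ↦ b * x) (gaussianReal 0 1) := by simpa using hint b 1
  rw [integral_add hint3 (hint e 4), integral_add hint2 (hint d 3), integral_add hint1 (hint c 2),
    integral_add (integrable_const a) hid]
  simp only [integral_const_mul, h2, h4, hodd 3 (by decide)]
  rw [integral_const_mul b fun x ↦ x, integral_id_gaussianReal]
  simp [mul_comm]

theorem memLp_two_sub_mul_sq_gaussianReal (α q : ℝ) :
    MemLp (fun x ↦ (α - q * x) ^ 2) 2 (gaussianReal 0 1) := by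
  rw [memLp_two_iff_integrable_sq (by fun_prop)]
  convert integrable_quartic_gaussianReal (α ^ 4) (-4 * α ^ 3 * q) (6 * α ^ 2 * q ^ 2)
    (-4 * α * q ^ 3) (q ^ 4) using 2
  ring

theorem integral_sub_mul_sq_gaussianReal (α q : ℝ) :
    ∫ x, (α - q * x) ^ 2 ∂gaussianReal 0 1 = α ^ 2 + q ^ 2 := by
  have h := integral_quartic_gaussianReal (α ^ 2) (-2 * α * q) (q ^ 2) 0 0
  rw [mul_zero, add_zero] at h
  rw [← h]
  congr with x
  ring

theorem variance_sub_mul_sq_gaussianReal (α q : ℝ) :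
    Var[fun x ↦ (α - q * x) ^ 2; gaussianReal 0 1] = 4 * α ^ 2 * q ^ 2 + 2 * q ^ 4 := by
  have hfourth : ∫ x, ((α - q * x) ^ 2) ^ 2 ∂gaussianReal 0 1 =
      α ^ 4 + 6 * α ^ 2 * q ^ 2 + 3 * q ^ 4 := by
    convert integral_quartic_gaussianReal (α ^ 4) (-4 * α ^ 3 * q) (6 * α ^ 2 * q ^ 2)
      (-4 * α * q ^ 3) (q ^ 4) using 2
    ext x; ring
  rw [variance_eq_sub (memLp_two_sub_mul_sq_gaussianReal α q)]
  simp only [Pi.pow_apply]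
  rw [hfourth, integral_sub_mul_sq_gaussianReal]
  ring

end Concentration

theorem pi_withDensity {ι : Type*} [Fintype ι] {Ω : ι → Type*} {mΩ : ∀ i, MeasurableSpace (Ω i)}
    (μ : ∀ i, Measure (Ω i)) [∀ i, IsProbabilityMeasure (μ i)] {f : ∀ i, Ω i → ENNReal}
    (hf : ∀ i, Measurable (f i)) [∀ i, SigmaFinite ((μ i).withDensity (f i))] :
    Measure.pi (fun i ↦ (μ i).withDensity (f i)) =
      (Measure.pi μ).withDensity fun ω ↦ ∏ i, f i (ω i) := by
  refine Measure.pi_eq fun s hs ↦ ?_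
  have hsf : ∀ i, Measurable ((s i).indicator (f i)) := fun i ↦ (hf i).indicator (hs i)
  have hindicator : (Set.univ.pi s).indicator (fun ω ↦ ∏ i, f i (ω i)) =
      fun ω ↦ ∏ i, (s i).indicator (f i) (ω i) := by
    ext ω
    classical
    simp only [Set.indicator_apply, Finset.prod_ite_zero, Set.mem_univ_pi, Finset.mem_univ,
      true_imp_iff]
  rw [withDensity_apply _ (.univ_pi hs), ← lintegral_indicator (.univ_pi hs), hindicator,
    ProbabilityTheory.lintegral_prod_eq_prod_lintegral_of_indepFun Finset.univ _
      (ProbabilityTheory.iIndepFun_pi fun i ↦ (hsf i).aemeasurable)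
      fun i ↦ (hsf i).comp (measurable_pi_apply i)]
  refine Finset.prod_congr rfl fun i _ ↦ ?_
  rw [withDensity_apply _ (hs i), ← lintegral_indicator (hs i)]
  exact (measurePreserving_eval μ i).lintegral_comp (hsf i)

section TestChannel
open ProbabilityTheory

theorem gaussianReal_eq_map_add_sqrt_mul (m : ℝ) {ρ : ℝ} (hρ : 0 ≤ ρ) :
    gaussianReal m ρ.toNNReal = (gaussianReal 0 1).map fun x ↦ m + √ρ * x := by
  have hcomp : (fun x ↦ m + √ρ * x) = (m + ·) ∘ (√ρ * ·) := rfl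
  rw [hcomp, ← Measure.map_map (by fun_prop) (by fun_prop), gaussianReal_map_const_mul,
    gaussianReal_map_const_add]
  congr 1
  · simp
  · ext; simp [hρ]

theorem gaussianReal_eq_withDensity (m : ℝ) {ρ : ℝ} (hρ : 0 < ρ) :
    gaussianReal m ρ.toNNReal = (gaussianReal 0 1).withDensity fun z ↦
      ENNReal.ofReal ((√ρ)⁻¹ * exp (z ^ 2 / 2 - (z - m) ^ 2 / (2 * ρ))) := by
  rw [gaussianReal_of_var_ne_zero _ (by simpa using hρ), gaussianReal_of_var_ne_zero _ one_ne_zero,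
    ← withDensity_mul _ (measurable_gaussianPDF _ _) (by fun_prop)]
  congr with z
  have hexp : exp (-(z - m) ^ 2 / (2 * ρ)) =
      exp (-z ^ 2 / 2) * exp (z ^ 2 / 2 - (z - m) ^ 2 / (2 * ρ)) := by
    rw [← exp_add]
    congr 1
    ring
  simp only [gaussianPDF, Pi.mul_apply, gaussianPDFReal, coe_toNNReal _ hρ.le, NNReal.coe_one,
    sub_zero, mul_one]
  rw [← ENNReal.ofReal_mul (by positivity), hexp, sqrt_mul (by positivity), mul_inv]
  congr 1
  ring

variable {ι : Type*} [Fintype ι]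

/-- The backward test channel from the source word `w` to a standard Gaussian `z`: independently
over the coordinates, `(w i, z i)` is a pair of standard Gaussians with correlation `√(1 - ρ i)`.
The reproduction of `w` is `√(1 - ρ i) * z i`, of mean squared error `ρ i`. -/
noncomputable def testChannel (ρ w : ι → ℝ) : Measure (ι → ℝ) :=
  Measure.pi fun i ↦ gaussianReal (√(1 - ρ i) * w i) (ρ i).toNNReal

/-- Squared error of the reproduction of `w` from `z` in the test channel, in units of the mean
squared error `ρ i` of each coordinate. -/
noncomputable def relSqError (ρ w z : ι → ℝ) : ℝ :=
  ∑ i, (w i - √(1 - ρ i) * z i) ^ 2 / ρ i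

instance (ρ w : ι → ℝ) : IsProbabilityMeasure (testChannel ρ w) := by
  unfold testChannel; infer_instance

theorem testChannel_eq_map {ρ : ι → ℝ} (hρ : ∀ i, 0 ≤ ρ i) (w : ι → ℝ) :
    testChannel ρ w = γ[ι].map fun x i ↦ √(1 - ρ i) * w i + √(ρ i) * x i := by
  simp only [testChannel, gaussianReal_eq_map_add_sqrt_mul _ (hρ _)]
  exact (Measure.pi_map_pi fun i ↦
    (by fun_prop : Measurable fun x ↦ _ + √(ρ i) * x).aemeasurable).symm

theorem testChannel_eq_withDensity {ρ : ι → ℝ} (hρ : ∀ i, 0 < ρ i) (w : ι → ℝ) :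
    testChannel ρ w = γ[ι].withDensity fun z ↦ ∏ i, ENNReal.ofReal
      ((√(ρ i))⁻¹ * exp (z i ^ 2 / 2 - (z i - √(1 - ρ i) * w i) ^ 2 / (2 * ρ i))) := by
  have hdensity := fun i ↦ gaussianReal_eq_withDensity (√(1 - ρ i) * w i) (hρ i)
  have : ∀ i, SigmaFinite ((gaussianReal 0 1).withDensity fun z ↦ ENNReal.ofReal
      ((√(ρ i))⁻¹ * exp (z ^ 2 / 2 - (z - √(1 - ρ i) * w i) ^ 2 / (2 * ρ i)))) := fun i ↦ by
    rw [← hdensity i]; infer_instance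
  simp only [testChannel, hdensity]
  exact pi_withDensity _ fun i ↦ by fun_prop

theorem one_sub_le_testChannel_real_relSqError {ρ : ι → ℝ} (hρ : ∀ i, ρ i ∈ Set.Ioc 0 1)
    (w : ι → ℝ) {v : ℝ} (hv : 0 < v) :
    1 - (∑ i, (4 * (ρ i * w i ^ 2) * (1 - ρ i) + 2 * (1 - ρ i) ^ 2)) / v ^ 2 ≤
      (testChannel ρ w).real
        {z | |relSqError ρ w z - ∑ i, (ρ i * w i ^ 2 + (1 - ρ i))| < v} := by
  have hq : ∀ i, √(1 - ρ i) ^ 2 = 1 - ρ i := fun i ↦ sq_sqrt (by linarith [(hρ i).2])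
  have hr : ∀ i, √(ρ i) ^ 2 = ρ i := fun i ↦ sq_sqrt (hρ i).1.le
  have herror : ∀ (x : ι → ℝ) i,
      (w i - √(1 - ρ i) * (√(1 - ρ i) * w i + √(ρ i) * x i)) ^ 2 / ρ i =
        (√(ρ i) * w i - √(1 - ρ i) * x i) ^ 2 := by
    intro x i
    have hfactor : w i - √(1 - ρ i) * (√(1 - ρ i) * w i + √(ρ i) * x i) =
        √(ρ i) * (√(ρ i) * w i - √(1 - ρ i) * x i) := by
      linear_combination -w i * hq i - w i * hr i
    rw [hfactor, mul_pow, hr, mul_div_cancel_left₀ _ (hρ i).1.ne']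
  have h := one_sub_sum_variance_div_sq_le_measureReal_pi
    (fun i ↦ memLp_two_sub_mul_sq_gaussianReal (√(ρ i) * w i) √(1 - ρ i)) hv
  simp only [variance_sub_mul_sq_gaussianReal, integral_sub_mul_sq_gaussianReal, mul_pow, hq, hr,
    show ∀ a : ℝ, a ^ 4 = (a ^ 2) ^ 2 from fun a ↦ by ring] at h
  rw [testChannel_eq_map fun i ↦ (hρ i).1.le, map_measureReal_apply (by fun_prop)
    (measurableSet_lt (by unfold relSqError; fun_prop) measurable_const)]
  simp only [relSqError, Set.preimage_ofPred_eq, herror]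
  exact h

theorem testChannel_real_le {ρ : ι → ℝ} (hρ : ∀ i, ρ i ∈ Set.Ioc 0 1) (w : ι → ℝ) {v : ℝ}
    {S : Set (ι → ℝ)} (hS : MeasurableSet S)
    (hSv : ∀ z ∈ S, ∑ i, (ρ i * w i ^ 2 + (1 - ρ i)) - relSqError ρ w z ≤ v) :
    (testChannel ρ w).real S ≤
      (∏ i, √(ρ i))⁻¹ * exp ((∑ i, (1 - ρ i) * (w i ^ 2 - 1) + v) / 2) * γ[ι].real S := by
  have hexponent : ∀ z, ∑ i, (z i ^ 2 / 2 - (z i - √(1 - ρ i) * w i) ^ 2 / (2 * ρ i)) =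
      (∑ i, (1 - ρ i) * (w i ^ 2 - 1) +
        (∑ i, (ρ i * w i ^ 2 + (1 - ρ i)) - relSqError ρ w z)) / 2 := by
    intro z
    rw [relSqError, ← Finset.sum_sub_distrib, ← Finset.sum_add_distrib, Finset.sum_div]
    refine Finset.sum_congr rfl fun i _ ↦ ?_
    have hq : √(1 - ρ i) ^ 2 = 1 - ρ i := sq_sqrt (by linarith [(hρ i).2])
    have := (hρ i).1.ne'
    field_simp
    linear_combination (z i ^ 2 - w i ^ 2) * hq
  have hle : testChannel ρ w S ≤ ENNReal.ofReal
      ((∏ i, √(ρ i))⁻¹ * exp ((∑ i, (1 - ρ i) * (w i ^ 2 - 1) + v) / 2)) * γ[ι] S := by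
    rw [testChannel_eq_withDensity fun i ↦ (hρ i).1, withDensity_apply _ hS, ← setLIntegral_const]
    refine setLIntegral_mono measurable_const fun z hz ↦ ?_
    rw [← ENNReal.ofReal_prod_of_nonneg fun i _ ↦ by positivity, Finset.prod_mul_distrib,
      Finset.prod_inv_distrib, ← exp_sum, hexponent]
    gcongr
    exact hSv z hz
  have hreal := ENNReal.toReal_mono
    (ENNReal.mul_ne_top ENNReal.ofReal_ne_top (measure_ne_top _ _)) hle
  rwa [ENNReal.toReal_mul, ENNReal.toReal_ofReal (by positivity)] at hreal

theorem le_pi_gaussianReal_real_relSqError_le {ρ : ι → ℝ} (hρ : ∀ i, ρ i ∈ Set.Ioc 0 1)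
    (w : ι → ℝ) {v : ℝ} (hv : 0 < v) :
    (1 - (∑ i, (4 * (ρ i * w i ^ 2) * (1 - ρ i) + 2 * (1 - ρ i) ^ 2)) / v ^ 2) *
        ((∏ i, √(ρ i)) * exp (-(∑ i, (1 - ρ i) * (w i ^ 2 - 1) + v) / 2)) ≤
      γ[ι].real {z | relSqError ρ w z ≤ ∑ i, (ρ i * w i ^ 2 + (1 - ρ i)) + v} := by
  set S : Set (ι → ℝ) := {z | |relSqError ρ w z - ∑ i, (ρ i * w i ^ 2 + (1 - ρ i))| < v}
  have hS : MeasurableSet S :=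
    measurableSet_lt (by unfold relSqError; fun_prop) measurable_const
  have hratio := (one_sub_le_testChannel_real_relSqError hρ w hv).trans <|
    testChannel_real_le hρ w hS fun z (hz : |_| < v) ↦ by linarith [(abs_lt.1 hz).1]
  have hprod : 0 < ∏ i, √(ρ i) := Finset.prod_pos fun i _ ↦ sqrt_pos.2 (hρ i).1
  calc _ ≤ (∏ i, √(ρ i))⁻¹ * exp ((∑ i, (1 - ρ i) * (w i ^ 2 - 1) + v) / 2) * γ[ι].real S *
          ((∏ i, √(ρ i)) * exp (-(∑ i, (1 - ρ i) * (w i ^ 2 - 1) + v) / 2)) := by gcongr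
    _ = γ[ι].real S := by
      rw [neg_div, exp_neg]
      field_simp
    _ ≤ _ := measureReal_mono fun z (hz : |_| < v) ↦ by
      rw [Set.mem_ofPred_eq]
      linarith [(abs_lt.1 hz).2]

end TestChannel

section ChiSquared
open ProbabilityTheory

theorem gaussianPDFReal_smul_exp_mul_sq_sub_one (x w : ℝ) :
    gaussianPDFReal 0 1 w • exp (x * (w ^ 2 - 1)) =
      (√(2 * π))⁻¹ * exp (-x) * exp (-(1 / 2 - x) * w ^ 2) := by
  simp only [gaussianPDFReal, smul_eq_mul, NNReal.coe_one, mul_one, sub_zero]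
  rw [mul_assoc, mul_assoc, ← exp_add, ← exp_add]
  congr 2
  ring

theorem integrable_exp_mul_sq_sub_one_gaussianReal {x : ℝ} (hx : x < 1 / 2) :
    Integrable (fun w ↦ exp (x * (w ^ 2 - 1))) (gaussianReal 0 1) := by
  rw [gaussianReal_of_var_ne_zero _ one_ne_zero,
    integrable_withDensity_iff_integrable_smul' (measurable_gaussianPDF 0 1)
      (.of_forall fun _ ↦ gaussianPDF_lt_top)]
  simp only [toReal_gaussianPDF, gaussianPDFReal_smul_exp_mul_sq_sub_one]
  exact (integrable_exp_neg_mul_sq (by linarith)).const_mul _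

theorem integral_exp_mul_sq_sub_one_gaussianReal {x : ℝ} (hx : x < 1 / 2) :
    ∫ w, exp (x * (w ^ 2 - 1)) ∂gaussianReal 0 1 = exp (-x) * (√(1 - 2 * x))⁻¹ := by
  have hx' : 0 < 1 - 2 * x := by linarith
  simp only [integral_gaussianReal_eq_integral_smul one_ne_zero,
    gaussianPDFReal_smul_exp_mul_sq_sub_one, integral_const_mul, integral_gaussian]
  rw [mul_right_comm, mul_comm]
  congr 1
  rw [← sqrt_inv, ← sqrt_inv, ← sqrt_mul (by positivity)]
  congr 1
  have := pi_pos.ne'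
  have : (1 : ℝ) / 2 - x ≠ 0 := by linarith
  field_simp

theorem inv_sqrt_one_sub_two_mul_le_exp {x : ℝ} (hx : |x| ≤ 1 / 4) :
    (√(1 - 2 * x))⁻¹ ≤ exp (x + 4 * x ^ 2) := by
  have habs : |2 * x| = 2 * |x| := by rw [abs_mul, abs_two]
  have hpos : 0 < 1 - 2 * x := by linarith [le_abs_self x]
  have htaylor := abs_log_sub_add_sum_range_le (x := 2 * x) (by linarith) 1
  have hrem : |2 * x| ^ (1 + 1) / (1 - |2 * x|) ≤ 8 * x ^ 2 := by
    rw [div_le_iff₀ (by linarith), one_add_one_eq_two, sq_abs, habs]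
    linarith [mul_nonneg (sq_nonneg x) (by linarith : 0 ≤ 1 - 4 * |x|)]
  have hlog := (abs_le.1 (htaylor.trans hrem)).1
  simp only [Finset.range_one, Finset.sum_singleton, zero_add, pow_one, CharP.cast_eq_zero,
    div_one] at hlog
  rw [← exp_log hpos, sqrt_eq_rpow, ← exp_mul, ← Real.exp_neg]
  gcongr
  linarith

theorem integral_exp_mul_sq_sub_one_gaussianReal_le {x : ℝ} (hx : |x| ≤ 1 / 4) :
    ∫ w, exp (x * (w ^ 2 - 1)) ∂gaussianReal 0 1 ≤ exp (4 * x ^ 2) := by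
  rw [integral_exp_mul_sq_sub_one_gaussianReal (by linarith [le_abs_self x])]
  calc exp (-x) * (√(1 - 2 * x))⁻¹ ≤ exp (-x) * exp (x + 4 * x ^ 2) := by
        gcongr
        exact inv_sqrt_one_sub_two_mul_le_exp hx
    _ = exp (4 * x ^ 2) := by rw [← exp_add]; ring_nf

theorem measureReal_le_sum_mul_sq_sub_one_le_exp {ι : Type*} [Fintype ι] {a : ι → ℝ}
    (ha : ∀ i, |a i| ≤ 1) {θ : ℝ} (hθ : θ ∈ Set.Icc 0 (1 / 4)) (u : ℝ) :
    γ[ι].real {w | u ≤ ∑ i, a i * (w i ^ 2 - 1)} ≤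
      exp (-θ * u + 4 * θ ^ 2 * Fintype.card ι) := by
  have hθa : ∀ i, |θ * a i| ≤ θ := fun i ↦ by
    rw [abs_mul, abs_of_nonneg hθ.1]
    exact mul_le_of_le_one_right hθ.1 (ha i)
  have hprod : (fun w : ι → ℝ ↦ exp (θ * ∑ i, a i * (w i ^ 2 - 1))) =
      fun w ↦ ∏ i, exp (θ * a i * (w i ^ 2 - 1)) := by
    simp only [← exp_sum, Finset.mul_sum, mul_assoc]
  have hint : Integrable (fun w ↦ exp (θ * ∑ i, a i * (w i ^ 2 - 1))) γ[ι] := by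
    rw [hprod]
    exact .fintype_prod (f := fun i x ↦ exp (θ * a i * (x ^ 2 - 1))) fun i ↦
      integrable_exp_mul_sq_sub_one_gaussianReal (by linarith [hθ.2, abs_le.1 (hθa i)])
  refine (measure_ge_le_exp_mul_mgf u hθ.1 hint).trans ?_
  rw [exp_add]
  gcongr
  rw [mgf, hprod, integral_fintype_prod_eq_prod (f := fun i x ↦ exp (θ * a i * (x ^ 2 - 1)))]
  calc ∏ i, ∫ x, exp (θ * a i * (x ^ 2 - 1)) ∂gaussianReal 0 1 ≤ ∏ _i : ι, exp (4 * θ ^ 2) := by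
        refine Finset.prod_le_prod (fun i _ ↦ integral_nonneg fun x ↦ exp_nonneg _) fun i _ ↦ ?_
        refine (integral_exp_mul_sq_sub_one_gaussianReal_le ((hθa i).trans hθ.2)).trans ?_
        gcongr exp (4 * ?_)
        exact sq_le_sq.2 ((hθa i).trans (le_abs_self θ))
    _ = exp (4 * θ ^ 2 * Fintype.card ι) := by
        rw [Finset.prod_const, ← exp_nat_mul, Finset.card_univ, mul_comm]

end ChiSquared

section TailIntegral

theorem setIntegral_le_sqrt_integral_sq_mul_sqrt_measureReal {X : Type*} [MeasurableSpace X]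
    {μ : Measure X} [IsFiniteMeasure μ] {f : X → ℝ} (hf : MemLp f 2 μ) (hf0 : 0 ≤ f) (S : Set X) :
    ∫ x in S, f x ∂μ ≤ √(∫ x, f x ^ 2 ∂μ) * √(μ.real S) := by
  have hholder := integral_mul_le_Lp_mul_Lq_of_nonneg (μ := μ.restrict S) (f := f) (g := 1)
    .two_two (.of_forall hf0) (.of_forall fun _ ↦ zero_le_one)
    (by simpa using hf.restrict S) (memLp_const 1)
  simp only [Pi.one_apply, rpow_two, one_pow, mul_one, ← sqrt_eq_rpow, integral_const, smul_eq_mul,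
    measureReal_restrict_apply_univ] at hholder
  refine hholder.trans ?_
  gcongr ?_ * _
  exact sqrt_le_sqrt <| setIntegral_le_integral hf.integrable_sq <| .of_forall fun x ↦
    sq_nonneg (f x)

end TailIntegral

section ActiveCoordinates
open ProbabilityTheory

variable {ι : Type*} [Fintype ι]

/-- The distortion `d_Σ` of a diagonal `Σ`, i.e. in the eigenbasis of `Σ`. -/
def weightedSqDist (lam x y : ι → ℝ) : ℝ :=
  ∑ i, lam i * (x i - y i) ^ 2

theorem integral_eval_sq_pi_gaussianReal (i : ι) : ∫ w, w i ^ 2 ∂γ[ι] = 1 := by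
  have h := integral_pow_two_mul_gaussianReal 1
  rw [integral_comp_eval (μ := fun _ : ι ↦ gaussianReal 0 1) (f := (· ^ 2)) (by fun_prop)]
  simpa using h

theorem memLp_two_eval_sq_pi_gaussianReal (i : ι) : MemLp (fun w ↦ w i ^ 2) 2 γ[ι] := by
  have h := memLp_two_sub_mul_sq_gaussianReal 0 1
  simp only [zero_sub, one_mul, neg_sq] at h
  exact h.comp_measurePreserving (measurePreserving_eval (fun _ : ι ↦ gaussianReal 0 1) i)

theorem setIntegral_eval_sq_pi_gaussianReal_le (i : ι) (S : Set (ι → ℝ)) :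
    ∫ w in S, w i ^ 2 ∂γ[ι] ≤ √(3 * γ[ι].real S) := by
  have hfourth : ∫ w, (w i ^ 2) ^ 2 ∂γ[ι] = 3 := by
    have h := integral_pow_two_mul_gaussianReal 2
    rw [integral_comp_eval (μ := fun _ : ι ↦ gaussianReal 0 1) (f := fun x ↦ (x ^ 2) ^ 2)
      (by fun_prop)]
    simpa [Nat.doubleFactorial, ← pow_mul] using h
  rw [sqrt_mul zero_le_three, ← hfourth]
  exact setIntegral_le_sqrt_integral_sq_mul_sqrt_measureReal (memLp_two_eval_sq_pi_gaussianReal i)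
    (fun w ↦ sq_nonneg (w i)) S

theorem le_pi_gaussianReal_real_relSqError_le_card_add {ρ : ι → ℝ} (hρ : ∀ i, ρ i ∈ Set.Ioc 0 1)
    {u : ℝ} (hu : 0 < u) (hvar : 16 * (Fintype.card ι + u) ≤ u ^ 2) {w : ι → ℝ}
    (hw : ∑ i, ρ i * (w i ^ 2 - 1) ≤ u) (hw' : ∑ i, (1 - ρ i) * (w i ^ 2 - 1) ≤ u) :
    3 / 4 * ((∏ i, √(ρ i)) * exp (-u)) ≤
      γ[ι].real {z | relSqError ρ w z ≤ Fintype.card ι + 2 * u} := by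
  have hmean : ∑ i, (ρ i * w i ^ 2 + (1 - ρ i)) =
      (Fintype.card ι : ℝ) + ∑ i, ρ i * (w i ^ 2 - 1) := by
    rw [Fintype.card_eq_sum_ones, Nat.cast_sum, ← Finset.sum_add_distrib]
    exact Finset.sum_congr rfl fun i _ ↦ by push_cast; ring
  have hvariance : ∑ i, (4 * (ρ i * w i ^ 2) * (1 - ρ i) + 2 * (1 - ρ i) ^ 2) ≤
      4 * (Fintype.card ι + u) := by
    refine le_trans ?_ (mul_le_mul_of_nonneg_left (hmean.le.trans (by gcongr)) zero_le_four)
    rw [Finset.mul_sum]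
    refine Finset.sum_le_sum fun i _ ↦ ?_
    have hρw : 0 ≤ ρ i ^ 2 * w i ^ 2 := by positivity
    nlinarith [(hρ i).1, (hρ i).2]
  have hchebyshev : 3 / 4 ≤ 1 -
      (∑ i, (4 * (ρ i * w i ^ 2) * (1 - ρ i) + 2 * (1 - ρ i) ^ 2)) / u ^ 2 := by
    rw [le_sub_comm, div_le_iff₀ (by positivity)]
    linarith
  have hball := le_pi_gaussianReal_real_relSqError_le hρ w hu
  calc 3 / 4 * ((∏ i, √(ρ i)) * exp (-u)) ≤ _ := by
        gcongr
        linarith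
    _ ≤ _ := hball
    _ ≤ γ[ι].real {z | relSqError ρ w z ≤ Fintype.card ι + 2 * u} :=
        measureReal_mono fun z hz ↦ by
          rw [Set.mem_ofPred_eq] at hz ⊢
          linarith

theorem weightedSqDist_eq_mul_relSqError {lam ρ : ι → ℝ} {s : ℝ} (hρ : ∀ i, ρ i ≠ 0)
    (hs : ∀ i, lam i * ρ i = s) (w z : ι → ℝ) :
    weightedSqDist lam w (fun i ↦ √(1 - ρ i) * z i) = s * relSqError ρ w z := by
  rw [weightedSqDist, relSqError, Finset.mul_sum]
  refine Finset.sum_congr rfl fun i _ ↦ ?_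
  have := hρ i
  rw [← hs i]
  field_simp

theorem integrable_weightedSqDist_zero (lam : ι → ℝ) :
    Integrable (fun w ↦ weightedSqDist lam w 0) γ[ι] := by
  simp only [weightedSqDist, Pi.zero_apply, sub_zero]
  exact integrable_finsetSum _ fun i _ ↦
    ((memLp_two_eval_sq_pi_gaussianReal i).integrable one_le_two).const_mul _

theorem integral_weightedSqDist_zero (lam : ι → ℝ) :
    ∫ w, weightedSqDist lam w 0 ∂γ[ι] = ∑ i, lam i := by
  simp only [weightedSqDist, Pi.zero_apply, sub_zero]
  rw [integral_finsetSum _ fun i _ ↦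
    ((memLp_two_eval_sq_pi_gaussianReal i).integrable one_le_two).const_mul _]
  simp only [integral_const_mul, integral_eval_sq_pi_gaussianReal, mul_one]

theorem setIntegral_weightedSqDist_zero_le {lam : ι → ℝ} (hlam : 0 ≤ lam) (S : Set (ι → ℝ)) :
    ∫ w in S, weightedSqDist lam w 0 ∂γ[ι] ≤ √(3 * γ[ι].real S) * ∑ i, lam i := by
  simp only [weightedSqDist, Pi.zero_apply, sub_zero]
  rw [integral_finsetSum _ fun i _ ↦ (((memLp_two_eval_sq_pi_gaussianReal i).integrable
    one_le_two).const_mul _).integrableOn, mul_comm, Finset.sum_mul]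
  refine Finset.sum_le_sum fun i _ ↦ ?_
  rw [integral_const_mul]
  exact mul_le_mul_of_nonneg_left (setIntegral_eval_sq_pi_gaussianReal_le i S) (hlam i)

/-- The words for which the sums governing the test channel do not exceed their means by more
than `u`. -/
def typicalSet (ρ : ι → ℝ) (u : ℝ) : Set (ι → ℝ) :=
  {w | ∑ i, ρ i * (w i ^ 2 - 1) < u} ∩ {w | ∑ i, (1 - ρ i) * (w i ^ 2 - 1) < u}

theorem measureReal_compl_typicalSet_le {ρ : ι → ℝ} (hρ : ∀ i, ρ i ∈ Set.Ioc 0 1) {θ : ℝ}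
    (hθ : θ ∈ Set.Icc 0 (1 / 4)) (u : ℝ) :
    γ[ι].real (typicalSet ρ u)ᶜ ≤ 2 * exp (-θ * u + 4 * θ ^ 2 * Fintype.card ι) := by
  rw [typicalSet, Set.compl_inter, Set.compl_ofPred, Set.compl_ofPred]
  simp only [not_lt]
  refine (measureReal_union_le _ _).trans ?_
  have h := measureReal_le_sum_mul_sq_sub_one_le_exp (a := ρ)
    (fun i ↦ abs_le.2 ⟨by linarith [(hρ i).1], (hρ i).2⟩) hθ u
  have h' := measureReal_le_sum_mul_sq_sub_one_le_exp (a := fun i ↦ 1 - ρ i)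
    (fun i ↦ abs_le.2 ⟨by linarith [(hρ i).2], by linarith [(hρ i).1]⟩) hθ u
  linarith

theorem isAchievable_weightedSqDist_of_mul_eq {lam ρ : ι → ℝ} (hlam : 0 ≤ lam)
    (hρ : ∀ i, ρ i ∈ Set.Ioc 0 1) {s : ℝ} (hs0 : 0 ≤ s) (hs : ∀ i, lam i * ρ i = s) {u θ : ℝ}
    (hu : 0 < u) (hvar : 16 * (Fintype.card ι + u) ≤ u ^ 2) (hθ : θ ∈ Set.Icc 0 (1 / 4)) (m : ℕ) :
    IsAchievable γ[ι] (weightedSqDist lam) (m + 1)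
      (s * (Fintype.card ι + 2 * u) + (exp (-(3 / 4 * ((∏ i, √(ρ i)) * exp (-u)) * m)) +
        √(6 * exp (-θ * u + 4 * θ ^ 2 * Fintype.card ι))) * ∑ i, lam i) := by
  have hd : Measurable (Function.uncurry (weightedSqDist lam)) := by
    unfold weightedSqDist Function.uncurry; fun_prop
  have hG : MeasurableSet (typicalSet ρ u) :=
    (measurableSet_lt (by fun_prop) measurable_const).inter
      (measurableSet_lt (by fun_prop) measurable_const)
  have hreproduction : Measurable fun (z : ι → ℝ) i ↦ √(1 - ρ i) * z i := by fun_prop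
  have := Measure.isProbabilityMeasure_map (μ := γ[ι]) hreproduction.aemeasurable
  have hball : ∀ w ∈ typicalSet ρ u, 3 / 4 * ((∏ i, √(ρ i)) * exp (-u)) ≤
      (γ[ι].map fun z i ↦ √(1 - ρ i) * z i).real
        {y | weightedSqDist lam w y ≤ s * (Fintype.card ι + 2 * u)} := by
    intro w hw
    have hball_meas : MeasurableSet
        {y | weightedSqDist lam w y ≤ s * (Fintype.card ι + 2 * u)} :=
      measurableSet_le (hd.comp measurable_prodMk_left) measurable_const
    rw [map_measureReal_apply hreproduction hball_meas]
    refine (le_pi_gaussianReal_real_relSqError_le_card_add hρ hu hvar hw.1.le hw.2.le).trans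
      (measureReal_mono fun z hz ↦ ?_)
    rw [Set.mem_preimage, Set.mem_ofPred_eq,
      weightedSqDist_eq_mul_relSqError (fun i ↦ (hρ i).1.ne') hs]
    exact mul_le_mul_of_nonneg_left hz hs0
  refine (isAchievable_of_forall_le_measureReal _ hd
    (fun w y ↦ Finset.sum_nonneg fun i _ ↦ mul_nonneg (hlam i) (sq_nonneg _))
    (integrable_weightedSqDist_zero lam) hG (by positivity) hball m).mono ?_
  have htail : √(3 * γ[ι].real (typicalSet ρ u)ᶜ) ≤
      √(6 * exp (-θ * u + 4 * θ ^ 2 * Fintype.card ι)) :=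
    sqrt_le_sqrt (by linarith [measureReal_compl_typicalSet_le hρ hθ u])
  rw [integral_weightedSqDist_zero, add_mul, ← add_assoc]
  gcongr
  exact (setIntegral_weightedSqDist_zero_le hlam _).trans
    (mul_le_mul_of_nonneg_right htail (Finset.sum_nonneg fun i _ ↦ hlam i))

theorem exp_le_prod_sqrt_div {lam : ι → ℝ} {t : ℝ} (ht : 0 < t) (hlam : ∀ i, t ≤ lam i) {u : ℝ}
    (hu : 0 ≤ u) :
    exp (-(∑ i, log (lam i / t)) / 2 - u) ≤
      ∏ i, √(t * (Fintype.card ι / (Fintype.card ι + 2 * u)) / lam i) := by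
  rcases isEmpty_or_nonempty ι with hι | hι
  · simpa using hu
  set k : ℝ := (Fintype.card ι : ℝ)
  have hk : 0 < k := by positivity
  have hsplit : -(∑ i, log (lam i / t)) / 2 - u = ∑ i, (-log (lam i / t) - 2 * u / k) / 2 := by
    rw [← Finset.sum_div, Finset.sum_sub_distrib, Finset.sum_neg_distrib, Finset.sum_const,
      Finset.card_univ, nsmul_eq_mul, mul_div_cancel₀ _ hk.ne']
    ring
  rw [hsplit, exp_sum]
  refine Finset.prod_le_prod (fun i _ ↦ (exp_pos _).le) fun i _ ↦ ?_
  rw [exp_half]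
  have hi : 0 < lam i := ht.trans_le (hlam i)
  have hshrink : 1 - (k + 2 * u) / k ≤ log (k / (k + 2 * u)) := by
    simpa only [inv_div] using one_sub_inv_le_log_of_pos (x := k / (k + 2 * u)) (by positivity)
  refine sqrt_le_sqrt ((le_log_iff_exp_le (by positivity)).1 ?_)
  have hfactor : t * (k / (k + 2 * u)) / lam i = (lam i / t)⁻¹ * (k / (k + 2 * u)) := by
    rw [inv_div, mul_div_right_comm]
  rw [hfactor, log_mul (by positivity) (by positivity), log_inv]
  rw [add_div, div_self hk.ne'] at hshrink
  linarith

theorem isAchievable_weightedSqDist_of_le {lam : ι → ℝ} {t : ℝ} (ht : 0 < t)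
    (hlam : ∀ i, t ≤ lam i) {u θ : ℝ} (hu : 0 < u) (hvar : 16 * (Fintype.card ι + u) ≤ u ^ 2)
    (hθ : θ ∈ Set.Icc 0 (1 / 4)) (m : ℕ) :
    IsAchievable γ[ι] (weightedSqDist lam) (m + 1)
      (t * Fintype.card ι +
        (exp (-(3 / 4 * exp (-(∑ i, log (lam i / t)) / 2 - 2 * u) * m)) +
          √(6 * exp (-θ * u + 4 * θ ^ 2 * Fintype.card ι))) * ∑ i, lam i) := by
  have hlam0 : ∀ i, 0 < lam i := fun i ↦ ht.trans_le (hlam i)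
  -- Below the water level, so that the margin `2 * u` of the ball costs rate but no distortion.
  set s : ℝ := t * (Fintype.card ι / (Fintype.card ι + 2 * u))
  have hst : s ≤ t := mul_le_of_le_one_right ht.le (div_le_one_of_le₀ (by linarith) (by positivity))
  have hρ : ∀ i, s / lam i ∈ Set.Ioc 0 1 := fun i ↦ by
    have : Nonempty ι := ⟨i⟩
    have := hlam0 i
    exact ⟨by positivity, (div_le_one this).2 (hst.trans (hlam i))⟩
  refine (isAchievable_weightedSqDist_of_mul_eq (fun i ↦ (hlam0 i).le) hρ (by positivity)
    (fun i ↦ mul_div_cancel₀ s (hlam0 i).ne') hu hvar hθ m).mono ?_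
  have hdistortion : s * (Fintype.card ι + 2 * u) = t * Fintype.card ι := by
    rw [mul_assoc, div_mul_cancel₀ _ (by positivity)]
  have hsum : 0 ≤ ∑ i, lam i := Finset.sum_nonneg fun i _ ↦ (hlam0 i).le
  have hball : exp (-(∑ i, log (lam i / t)) / 2 - 2 * u) ≤
      (∏ i, √(s / lam i)) * exp (-u) := by
    rw [two_mul, ← sub_sub, sub_eq_add_neg _ u, exp_add]
    exact mul_le_mul_of_nonneg_right (exp_le_prod_sqrt_div ht hlam hu.le) (exp_pos _).le
  rw [hdistortion]
  gcongr

end ActiveCoordinates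

section Waterfilling
open ProbabilityTheory

variable {ι : Type*} [Fintype ι]

theorem IsAchievable.weightedSqDist_of_subtype {lam : ι → ℝ} {p : ι → Prop} [DecidablePred p]
    {M : ℕ} {D : ℝ} (h : IsAchievable γ[{i // p i}] (weightedSqDist fun i ↦ lam i) M D) :
    IsAchievable γ[ι] (weightedSqDist lam) M (D + ∑ i : {i // ¬ p i}, lam i) := by
  have hint (i : {i // ¬ p i}) : Integrable (fun w : ι → ℝ ↦ lam i * w i ^ 2) γ[ι] :=
    ((memLp_two_eval_sq_pi_gaussianReal i.1).integrable one_le_two).const_mul _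
  have hφ : MeasurePreserving (fun (w : ι → ℝ) (i : {i // p i}) ↦ w i) γ[ι] γ[{i // p i}] :=
    measurePreserving_fst.comp
      (measurePreserving_piEquivPiSubtypeProd (fun _ : ι ↦ gaussianReal 0 1) p)
  have hrest : ∫ w, ∑ i : {i // ¬ p i}, lam i * w i ^ 2 ∂γ[ι] = ∑ i : {i // ¬ p i}, lam i := by
    rw [integral_finsetSum _ fun i _ ↦ hint i]
    simp only [integral_const_mul, integral_eval_sq_pi_gaussianReal, mul_one]
  rw [← hrest]
  refine h.comp_measurePreserving hφ (fun y i ↦ if hi : p i then y ⟨i, hi⟩ else 0)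
    (integrable_finsetSum _ fun i _ ↦ hint i) fun w y ↦ ?_
  rw [weightedSqDist, ← Fintype.sum_subtype_add_sum_subtype p]
  refine congrArg₂ _ (Fintype.sum_congr _ _ fun i ↦ ?_) (Fintype.sum_congr _ _ fun i ↦ ?_)
  · rw [dif_pos i.2]
  · rw [dif_neg i.2, sub_zero]

theorem isAchievable_weightedSqDist_waterfilling {lam : ι → ℝ} (hlam : 0 ≤ lam) {t : ℝ}
    (ht : 0 < t) {u θ : ℝ} (hu : 0 < u) (hvar : 16 * (Fintype.card ι + u) ≤ u ^ 2)
    (hθ : θ ∈ Set.Icc 0 (1 / 4)) (m : ℕ) :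
    IsAchievable γ[ι] (weightedSqDist lam) (m + 1)
      (∑ i, min (lam i) t +
        (exp (-(3 / 4 * exp (-(∑ i, max 0 (log (lam i / t))) / 2 - 2 * u) * m)) +
          √(6 * exp (-θ * u + 4 * θ ^ 2 * Fintype.card ι))) * ∑ i, lam i) := by
  classical
  set active : ι → Prop := fun i ↦ t < lam i
  have hcard : (Fintype.card {i // active i} : ℝ) ≤ Fintype.card ι := by
    exact_mod_cast Fintype.card_subtype_le _
  have hmin : t * Fintype.card {i // active i} + ∑ i : {i // ¬ active i}, lam i =
      ∑ i, min (lam i) t := by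
    rw [← Fintype.sum_subtype_add_sum_subtype active,
      Fintype.sum_congr _ _ fun i : {i // active i} ↦ min_eq_right i.2.le,
      Fintype.sum_congr _ _ fun i : {i // ¬ active i} ↦ min_eq_left (not_lt.1 i.2),
      Finset.sum_const, Finset.card_univ, nsmul_eq_mul, mul_comm]
  have hlog : ∑ i : {i // active i}, log (lam i / t) ≤ ∑ i, max 0 (log (lam i / t)) := by
    rw [← Fintype.sum_subtype_add_sum_subtype active]
    exact (Finset.sum_le_sum fun i _ ↦ le_max_right _ _).trans
      (le_add_of_nonneg_right (Finset.sum_nonneg fun i _ ↦ le_max_left _ _))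
  have hsum : ∑ i : {i // active i}, lam i ≤ ∑ i, lam i := by
    rw [← Fintype.sum_subtype_add_sum_subtype active]
    exact le_add_of_nonneg_right (Finset.sum_nonneg fun i _ ↦ hlam i)
  have hsum0 : 0 ≤ ∑ i : {i // active i}, lam i := Finset.sum_nonneg fun i _ ↦ hlam i
  have hactive := isAchievable_weightedSqDist_of_le (lam := fun i : {i // active i} ↦ lam i) ht
    (fun i ↦ i.2.le) hu (by linarith) hθ m
  refine hactive.weightedSqDist_of_subtype.mono ?_
  rw [add_right_comm, hmin]
  gcongr

end Waterfilling

section Asymptotics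

variable {n : ℕ}

theorem sum_max_zero_log_div_eq (hn : n ≠ 0) (lam : Fin n → ℝ) (t : ℝ) :
    ∑ i, max 0 (log (lam i / t)) = 2 * n * log 2 * Rwf lam t := by
  have hlog : 0 < log 2 := log_pos one_lt_two
  have hsum : ∑ i, max 0 (logb 2 (lam i / t)) = (∑ i, max 0 (log (lam i / t))) / log 2 := by
    rw [Finset.sum_div]
    refine Finset.sum_congr rfl fun i _ ↦ ?_
    rw [logb, ← zero_div (log 2), max_div_div_right hlog.le, zero_div]
  rw [Rwf, hsum]
  field_simp

theorem natCast_mul_Dwf (hn : n ≠ 0) (lam : Fin n → ℝ) (t : ℝ) :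
    n * Dwf lam t = ∑ i, min (lam i) t := by
  rw [Dwf]
  field_simp

theorem Rwf_nonneg (lam : Fin n → ℝ) (t : ℝ) : 0 ≤ Rwf lam t := by
  unfold Rwf
  have := Finset.sum_nonneg fun i (_ : i ∈ Finset.univ) ↦ le_max_left 0 (logb 2 (lam i / t))
  positivity

theorem rpow_neg_eq_exp_neg_mul_log {x : ℝ} (hx : 0 < x) (B : ℝ) :
    x ^ (-B) = exp (-(B * log x)) := by
  rw [rpow_def_of_pos hx, mul_neg, mul_comm]

theorem one_half_le_log_natCast (hn : 2 ≤ n) : 1 / 2 ≤ log n := by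
  linarith [log_two_gt_d9, log_le_log two_pos (Nat.ofNat_le_cast.2 hn : (2 : ℝ) ≤ n)]

theorem one_le_sqrt_natCast_mul_log (hn : 2 ≤ n) : 1 ≤ √(n * log n) := by
  have hn2 : (2 : ℝ) ≤ n := by exact_mod_cast hn
  have hlog := one_half_le_log_natCast hn
  exact one_le_sqrt.2 (by nlinarith)

theorem log_le_sqrt_natCast_mul_log (n : ℕ) : log n ≤ √(n * log n) := by
  refine le_sqrt_of_sq_le ?_
  have h0 := log_natCast_nonneg n
  have hle := log_le_self (Nat.cast_nonneg (α := ℝ) n)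
  nlinarith

theorem natCast_mul_sqrt_div (n : ℕ) (x : ℝ) : n * √(x / n) = √(n * x) := by
  rcases n.eq_zero_or_pos with rfl | hn
  · simp
  rw [show n * x = (n : ℝ) ^ 2 * (x / n) by field_simp, sqrt_mul (by positivity),
    sqrt_sq n.cast_nonneg]

theorem sixteen_mul_add_le_sq (hn : 2 ≤ n) {C : ℝ} (hC : 18 ≤ C) :
    16 * (n + C * √(n * log n)) ≤ (C * √(n * log n)) ^ 2 := by
  have hS := one_le_sqrt_natCast_mul_log hn
  have hn2 : (2 : ℝ) ≤ n := by exact_mod_cast hn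
  have hlog : 1 / 2 ≤ log n := one_half_le_log_natCast hn
  have hsq : √(n * log n) ^ 2 = n * log n := sq_sqrt (by positivity)
  set S := √(n * log n)
  have hnS : (n : ℝ) ≤ 2 * S ^ 2 := by rw [hsq]; nlinarith
  have hSS : C * S ≤ C * S ^ 2 := by gcongr; nlinarith
  have hCC : 32 + 16 * C ≤ C ^ 2 := by nlinarith
  calc 16 * (n + C * S) ≤ 16 * (2 * S ^ 2 + C * S ^ 2) := by gcongr
    _ = (32 + 16 * C) * S ^ 2 := by ring
    _ ≤ C ^ 2 * S ^ 2 := by gcongr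
    _ = (C * S) ^ 2 := (mul_pow C S 2).symm

theorem chernoff_exponent_le (hn : n ≠ 0) {B C : ℝ} (hC : 8 * B + 1 ≤ C) :
    -(√(log n / n) / 4) * (C * √(n * log n)) + 4 * (√(log n / n) / 4) ^ 2 * n ≤
      -(2 * (B * log n)) := by
  have hlog := log_natCast_nonneg n
  have hsq : √(log n / n) ^ 2 * n = log n := by
    rw [sq_sqrt (by positivity), div_mul_cancel₀ _ (by exact_mod_cast hn)]
  calc -(√(log n / n) / 4) * (C * √(n * log n)) + 4 * (√(log n / n) / 4) ^ 2 * n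
      = (1 - C) / 4 * (√(log n / n) ^ 2 * n) := by rw [← natCast_mul_sqrt_div]; ring
    _ = (1 - C) / 4 * log n := by rw [hsq]
    _ ≤ -(2 * (B * log n)) := by nlinarith

theorem exists_floor_eq_succ_and_div_four_le {x : ℝ} (hx : 4 ≤ x) :
    ∃ m : ℕ, ⌊x⌋₊ = m + 1 ∧ x / 4 ≤ m := by
  obtain ⟨m, hm⟩ := Nat.exists_eq_succ_of_ne_zero (Nat.floor_pos.2 (by linarith : 1 ≤ x)).ne'
  have hlt := Nat.lt_floor_add_one x
  rw [hm] at hlt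
  push_cast at hlt
  exact ⟨m, hm, by linarith⟩

theorem le_exp_sub_mul_rpow_two_add {a b y s : ℝ} (ha : 0 ≤ a) (hs : b + 6 * a ≤ log 2 * s) :
    a ≤ 3 / 4 * exp (-(log 2 * y) - b) * (2 ^ (y + s) / 4) :=
  calc a ≤ 3 / 16 * (log 2 * s - b + 1) := by linarith
    _ ≤ 3 / 16 * exp (log 2 * s - b) := by gcongr; exact add_one_le_exp _
    _ = 3 / 16 * (exp (-(log 2 * y) - b) * exp (log 2 * (y + s))) := by rw [← exp_add]; ring_nf
    _ = 3 / 4 * exp (-(log 2 * y) - b) * (2 ^ (y + s) / 4) := by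
        rw [rpow_def_of_pos two_pos]; ring

theorem four_le_rpow_two_add {y s : ℝ} (hy : 0 ≤ y) (hs : 2 ≤ s) : (4 : ℝ) ≤ 2 ^ (y + s) := by
  calc (4 : ℝ) = 2 ^ (2 : ℝ) := by norm_num
    _ ≤ 2 ^ (y + s) := rpow_le_rpow_of_exponent_le one_le_two (by linarith)

theorem sqrt_log_div_natCast_div_four_mem_Icc (n : ℕ) :
    √(log n / n) / 4 ∈ Set.Icc (0 : ℝ) (1 / 4) := by
  have : √(log n / n) ≤ 1 :=
    sqrt_le_one.2 (div_le_one_of_le₀ (log_le_self n.cast_nonneg) n.cast_nonneg)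
  exact ⟨by positivity, by linarith⟩

theorem sqrt_six_mul_exp_le {x y : ℝ} (h : x ≤ -(2 * y)) : √(6 * exp x) ≤ 3 * exp (-y) := by
  refine sqrt_le_iff.2 ⟨by positivity, ?_⟩
  calc 6 * exp x ≤ 3 ^ 2 * exp (-(2 * y)) := by gcongr; norm_num
    _ = (3 * exp (-y)) ^ 2 := by rw [mul_pow, ← exp_nat_mul]; congr 2; push_cast; ring

theorem exists_isAchievable_weightedSqDist {B : ℝ} (hB : 0 < B) :
    ∃ c : ℝ, 0 < c ∧ ∀ n : ℕ, 2 ≤ n → ∀ (R : ℝ) (lam : Fin n → ℝ), 0 ≤ lam → ∀ t : ℝ, 0 < t →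
      Rwf lam t = R - c * √(log n / n) →
      IsAchievable (_root_.stdGaussian n) (weightedSqDist lam) ⌊(2 : ℝ) ^ (n * R)⌋₊
        (n * Dwf lam t + c * (n : ℝ) ^ (-B) * ∑ i, lam i) := by
  set C : ℝ := 8 * B + 18
  set c : ℝ := 4 * C + 12 * B
  refine ⟨c, by positivity, fun n hn R lam hlam t ht hR ↦ ?_⟩
  have hn0 : n ≠ 0 := by lia
  set S : ℝ := √(n * log n)
  have hS : 1 ≤ S := one_le_sqrt_natCast_mul_log hn
  have hlogS : B * log n ≤ B * S := mul_le_mul_of_nonneg_left (log_le_sqrt_natCast_mul_log n) hB.le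
  have hrate : n * R = n * Rwf lam t + c * S := by
    rw [hR, mul_sub, mul_left_comm, natCast_mul_sqrt_div]
    ring
  have hRwf : 0 ≤ n * Rwf lam t := mul_nonneg n.cast_nonneg (Rwf_nonneg lam t)
  obtain ⟨m, hm, hm4⟩ := exists_floor_eq_succ_and_div_four_le
    (four_le_rpow_two_add hRwf (by nlinarith : 2 ≤ c * S))
  have hredundancy : 2 * (C * S) + 6 * (B * log n) ≤ log 2 * (c * S) :=
    calc 2 * (C * S) + 6 * (B * log n) ≤ 2 * (C * S) + 6 * (B * S) := by gcongr
      _ = 1 / 2 * (c * S) := by ring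
      _ ≤ log 2 * (c * S) := by gcongr; linarith [log_two_gt_d9]
  have hcovering : B * log n ≤ 3 / 4 * exp (-(log 2 * (n * Rwf lam t)) - 2 * (C * S)) * m :=
    (le_exp_sub_mul_rpow_two_add (by positivity) hredundancy).trans (by gcongr)
  have hatypical : √(6 * exp (-(√(log n / n) / 4) * (C * S) +
      4 * (√(log n / n) / 4) ^ 2 * n)) ≤ 3 * exp (-(B * log n)) :=
    sqrt_six_mul_exp_le (chernoff_exponent_le hn0 (by linarith))
  have hvar : 16 * ((Fintype.card (Fin n) : ℝ) + C * S) ≤ (C * S) ^ 2 := by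
    rw [Fintype.card_fin]
    exact sixteen_mul_add_le_sq hn (by linarith)
  have hsum : 0 ≤ ∑ i, lam i := Finset.sum_nonneg fun i _ ↦ hlam i
  rw [hrate, hm, natCast_mul_Dwf hn0, rpow_neg_eq_exp_neg_mul_log (by positivity)]
  refine (isAchievable_weightedSqDist_waterfilling hlam ht (by positivity) hvar
    (sqrt_log_div_natCast_div_four_mem_Icc n) m).mono ?_
  rw [sum_max_zero_log_div_eq hn0, Fintype.card_fin,
    show -(2 * n * log 2 * Rwf lam t) / 2 = -(log 2 * (n * Rwf lam t)) by ring]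
  gcongr
  calc _ ≤ exp (-(B * log n)) + 3 * exp (-(B * log n)) := by gcongr
    _ = 4 * exp (-(B * log n)) := by ring
    _ ≤ c * exp (-(B * log n)) := by gcongr; linarith

end Asymptotics

section Rotation
open ProbabilityTheory

variable {ι : Type*} [Fintype ι] [DecidableEq ι]

theorem measurePreserving_mulVec_pi_gaussianReal {U : Matrix ι ι ℝ} (hU : U ∈ orthogonalGroup ι ℝ) :
    MeasurePreserving (U *ᵥ ·) γ[ι] γ[ι] := by
  have hto : MeasurePreserving (MeasurableEquiv.toLp 2 (ι → ℝ)) γ[ι]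
      (stdGaussian (EuclideanSpace ℝ ι)) :=
    ⟨(MeasurableEquiv.toLp 2 (ι → ℝ)).measurable, map_pi_eq_stdGaussian⟩
  let e : EuclideanSpace ℝ ι ≃ₗᵢ[ℝ] EuclideanSpace ℝ ι :=
    Unitary.linearIsometryEquiv ⟨toEuclideanCLM (𝕜 := ℝ) U, Unitary.map_mem toEuclideanCLM hU⟩
  have he : MeasurePreserving e (stdGaussian (EuclideanSpace ℝ ι)) (stdGaussian _) :=
    ⟨e.continuous.measurable, stdGaussian_map e⟩
  exact hto.symm.comp (he.comp hto)

theorem dSig_mulVec_eq_weightedSqDist {n : ℕ} {U : Matrix (Fin n) (Fin n) ℝ} (hU : Uᵀ * U = 1)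
    (lam w y : Fin n → ℝ) :
    dSig (U * diagonal lam * Uᵀ) w (U *ᵥ y) = weightedSqDist lam (Uᵀ *ᵥ w) y := by
  have hrotate : Uᵀ *ᵥ (w - U *ᵥ y) = Uᵀ *ᵥ w - y := by
    rw [mulVec_sub, mulVec_mulVec, hU, one_mulVec]
  rw [dSig, ← mulVec_mulVec, ← mulVec_mulVec, dotProduct_mulVec, ← mulVec_transpose, hrotate,
    dotProduct, weightedSqDist]
  simp only [mulVec_diagonal, Pi.sub_apply]
  exact Finset.sum_congr rfl fun i _ ↦ by ring

theorem nonneg_of_posSemidef_mul_diagonal_mul_transpose {U : Matrix ι ι ℝ}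
    (hU : Uᵀ * U = 1) {lam : ι → ℝ} (h : (U * diagonal lam * Uᵀ).PosSemidef) : 0 ≤ lam := by
  have hdiag : Uᵀ * (U * diagonal lam * Uᵀ) * U = diagonal lam := by
    rw [mul_assoc, mul_assoc, mul_assoc, hU, mul_one, ← mul_assoc, hU, one_mul]
  have hconj := h.conjTranspose_mul_mul_same U
  rw [conjTranspose_eq_transpose_of_trivial, hdiag, posSemidef_diagonal_iff] at hconj
  exact hconj

theorem trace_mul_diagonal_mul_transpose {U : Matrix ι ι ℝ} (hU : Uᵀ * U = 1) (lam : ι → ℝ) :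
    (U * diagonal lam * Uᵀ).trace = ∑ i, lam i := by
  rw [trace_mul_comm, ← mul_assoc, hU, one_mul, trace_diagonal]

end Rotation

theorem stmt_1_general (B : ℝ) (hB : 0 < B) :
    ∃ c : ℝ, 0 < c ∧
      ∀ n : ℕ, 2 ≤ n → ∀ (R : ℝ) (Sig : Matrix (Fin n) (Fin n) ℝ), Sig.PosSemidef →
      ∀ (U : Matrix (Fin n) (Fin n) ℝ), U * Uᵀ = 1 →
      ∀ lam : Fin n → ℝ, Sig = U * Matrix.diagonal lam * Uᵀ →
      ∀ t' : ℝ, 0 < t' → Rwf lam t' = R - c * Real.sqrt (Real.log n / n) →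
      IsAchievable (stdGaussian n) (dSig Sig) ⌊(2 : ℝ) ^ ((n : ℝ) * R)⌋₊
        ((n : ℝ) * Dwf lam t' + c * (n : ℝ) ^ (-B) * Sig.trace) := by
  obtain ⟨c, hc, hdiagonal⟩ := exists_isAchievable_weightedSqDist hB
  refine ⟨c, hc, ?_⟩
  rintro n hn R _ hSig U hU lam rfl t ht hR
  have hU' : Uᵀ * U = 1 := mul_eq_one_comm.1 hU
  have hrotation : MeasurePreserving (Uᵀ *ᵥ ·) (stdGaussian n) (stdGaussian n) :=
    measurePreserving_mulVec_pi_gaussianReal ((mem_orthogonalGroup_iff' _ _).2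
      (by rwa [transpose_transpose]))
  have hlam := nonneg_of_posSemidef_mul_diagonal_mul_transpose hU' hSig
  rw [trace_mul_diagonal_mul_transpose hU']
  simpa using (hdiagonal n hn R lam hlam t ht hR).comp_measurePreserving hrotation (U *ᵥ ·)
    (integrable_zero _ _ _) fun w y ↦ by
      rw [dSig_mulVec_eq_weightedSqDist hU', Pi.zero_apply, add_zero]

/-- achievability of the waterfilling bound (oracle setting). -/
theorem stmt_1 (B : ℝ) (hB : 0 < B) :
    ∃ c : ℝ, 0 < c ∧
      ∀ n : ℕ, 2 ≤ n → ∀ R : ℝ, 0 < R - c * Real.sqrt (Real.log n / n) →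
      ∀ (Sig : Matrix (Fin n) (Fin n) ℝ), Sig.PosSemidef → Sig ≠ 0 →
      ∀ (U : Matrix (Fin n) (Fin n) ℝ), U * Uᵀ = 1 →
      ∀ lam : Fin n → ℝ, Sig = U * Matrix.diagonal lam * Uᵀ →
      ∀ t' : ℝ, 0 < t' → Rwf lam t' = R - c * Real.sqrt (Real.log n / n) →
      ∃ (f : (Fin n → ℝ) → Fin ⌊(2 : ℝ) ^ ((n : ℝ) * R)⌋₊)
        (g : Fin ⌊(2 : ℝ) ^ ((n : ℝ) * R)⌋₊ → (Fin n → ℝ)),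
        ∫ w, dSig Sig w (g (f w)) ∂(stdGaussian n)
          ≤ (n : ℝ) * Dwf lam t' + c * (n : ℝ) ^ (-B) * Sig.trace := by
  obtain ⟨c, hc, hachievable⟩ := stmt_1_general B hB
  refine ⟨c, hc, fun n hn R _ Sig hSig _ U hU lam hdiag t ht hR ↦ ?_⟩
  obtain ⟨f, g, -, -, hle⟩ := hachievable n hn R Sig hSig U hU lam hdiag t ht hR
  exact ⟨f, g, hle⟩
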